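/- Let n ≥ 1 and let f : C^{gp}_{n+1}(M;ℤ)_G → A be a group (n+1)-cocycle, i.e. a homomorphism with f ∘ ∂^{gp}_{n+2} = 0. Then Φ_f := f ∘ ψ_n ∘ γ_n : C^{BR}_n(X;ℤ)_X → A is a birack n-cocycle of the G-Alexander biquandle X with X-set X, i.e. Φ_f ∘ ∂^{BR}_{n+1} = 0. -/

import Mathlib

open FreeAbelianGroup
open scoped TensorProduct

namespace GAlex

variable {G M A : Type*} [Group G] [AddCommGroup M] [DistribMulAction Gᵐᵒᵖ M] [AddCommGroup A]

/-- The right action `m · g` of a group element `g : G` on `m : M`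
(coming from the right `ℤ[G]`-module structure on `M`). -/
def ract (m : M) (g : G) : M := MulOpposite.op g • m

variable (φ : G →* G)

/-- The operation `(m,g) ⊳ (n,h) = (mh + n(φ(h) − h), h⁻¹gh)` of the `G`-Alexander biquandle. -/
def under (x y : M × G) : M × G :=
  (ract x.1 y.2 + ract y.1 (φ y.2) - ract y.1 y.2, y.2⁻¹ * x.2 * y.2)

/-- The operation `(m,g) ⊚ (n,h) = (mφ(h), g)` of the `G`-Alexander biquandle. -/
def overOp (x y : M × G) : M × G := (ract x.1 (φ y.2), x.2)

/-- The face `g_{⟨p⟩}` (delete the `p`-th entry). -/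
def dGdel (n : ℕ) (p : Fin (n + 1)) (g : Fin (n + 1) → G) : Fin n → G :=
  fun j => g (p.succAbove j)

/-- The face `g_{⟨⊲p⟩}` (conjugate the first entries by `g p` and delete the `p`-th entry). -/
def dGconj (n : ℕ) (p : Fin (n + 1)) (g : Fin (n + 1) → G) : Fin n → G :=
  fun j => if (j : ℕ) < (p : ℕ) then (g p)⁻¹ * g j.castSucc * g p else g j.succ

/-- The face `m_{⟨p⟩}` (merge the two entries adjacent to position `p`;
for `p = 0` drop the first entry). -/
def dMmer (n : ℕ) (p : Fin (n + 1)) (m : Fin (n + 1) → M) : Fin n → M :=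
  fun j =>
    if (j : ℕ) + 1 < (p : ℕ) then m j.castSucc
    else if (j : ℕ) + 1 = (p : ℕ) then m j.castSucc + m j.succ
    else m j.succ

/-- The face `m_{⟨⊲p⟩}`. -/
def dMconj (n : ℕ) (p : Fin (n + 1)) (g : Fin (n + 1) → G) (m : Fin (n + 1) → M) : Fin n → M :=
  fun j =>
    if (j : ℕ) + 1 < (p : ℕ) then ract (m j.castSucc) (g p)
    else if (j : ℕ) + 1 = (p : ℕ) then ract (m j.castSucc) (g p) + ract (m j.succ) (φ (g p))
    else ract (m j.succ) (φ (g p))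

/-- The boundary map `∂^{BR_U}_{n+1} : C^{BR_U}_{n+1}(X;ℤ) → C^{BR_U}_n(X;ℤ)`
(the boundary `∂^{BR_U}_k` is `0` for `k ≤ 1`, which agrees with this formula at `n = 0`). -/
def dBRU (n : ℕ) :
    FreeAbelianGroup ((Fin (n + 1) → G) × (Fin (n + 1) → M)) →+
      FreeAbelianGroup ((Fin n → G) × (Fin n → M)) :=
  FreeAbelianGroup.lift fun x =>
    ∑ p : Fin (n + 1),
      (-1 : ℤ) ^ (p : ℕ) •
        (FreeAbelianGroup.of (dGdel n p x.1, dMmer n p x.2) -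
          FreeAbelianGroup.of (dGconj n p x.1, dMconj φ n p x.1 x.2))

/-- The birack boundary map `∂^{BR}_{n+1} : C^{BR}_{n+1}(X;ℤ) → C^{BR}_n(X;ℤ)`
for the `G`-Alexander biquandle `X = M × G` (with trivial `X`-set). -/
def dBR (n : ℕ) :
    FreeAbelianGroup (Fin (n + 1) → M × G) →+ FreeAbelianGroup (Fin n → M × G) :=
  FreeAbelianGroup.lift fun x =>
    ∑ p : Fin (n + 1),
      (-1 : ℤ) ^ (p : ℕ) •
        (FreeAbelianGroup.of (fun j => x (p.succAbove j)) -
          FreeAbelianGroup.of (fun j : Fin n =>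
            if (j : ℕ) < (p : ℕ) then under φ (x j.castSucc) (x p)
            else overOp φ (x j.succ) (x p)))

/-- `γ_n((m₁,g₁),…,(m_n,g_n)) = (g₁,…,g_n; m₁−m₂, …, m_{n−1}−m_n, m_n)`. -/
def gammaMap (n : ℕ) :
    FreeAbelianGroup (Fin n → M × G) →+ FreeAbelianGroup ((Fin n → G) × (Fin n → M)) :=
  FreeAbelianGroup.lift fun x =>
    FreeAbelianGroup.of
      (fun j => (x j).2,
       fun j => (x j).1 - if h : (j : ℕ) + 1 < n then (x ⟨(j : ℕ) + 1, h⟩).1 else 0)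

/-- `r_n(g₁,…,g_n; m₁,…,m_n) = ((m₁+⋯+m_n, g₁), (m₂+⋯+m_n, g₂), …, (m_n, g_n))`. -/
def rMap (n : ℕ) :
    FreeAbelianGroup ((Fin n → G) × (Fin n → M)) →+ FreeAbelianGroup (Fin n → M × G) :=
  FreeAbelianGroup.lift fun p =>
    FreeAbelianGroup.of fun j => ((∑ i ∈ Finset.Ici j, p.2 i), p.1 j)

/-- The boundary map `∂^{BR_U}_{d+1}` of `C^{BR_U}_*(X;ℤ)_X` (the version with `X`-set `X`,
whose degree-`d` chain group is free on `(1+d)`-tuples); it is `0` in degrees `≤ 1`. -/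
def dBRUX : (d : ℕ) →
    FreeAbelianGroup ((Fin (d + 2) → G) × (Fin (d + 2) → M)) →+
      FreeAbelianGroup ((Fin (d + 1) → G) × (Fin (d + 1) → M))
  | 0 => 0
  | d + 1 =>
    FreeAbelianGroup.lift fun x =>
      ∑ i : Fin (d + 2),
        (-1 : ℤ) ^ (i : ℕ) •
          (FreeAbelianGroup.of (dGdel (d + 2) i.succ x.1, dMmer (d + 2) i.succ x.2) -
            FreeAbelianGroup.of (dGconj (d + 2) i.succ x.1, dMconj φ (d + 2) i.succ x.1 x.2))

/-- The boundary map `∂^{BR}_{d+1}` of `C^{BR}_*(X;ℤ)_X` (the version with `X`-set `X`);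
it is `0` in degrees `≤ 1`. -/
def dBRX : (d : ℕ) →
    FreeAbelianGroup (Fin (d + 2) → M × G) →+ FreeAbelianGroup (Fin (d + 1) → M × G)
  | 0 => 0
  | d + 1 =>
    FreeAbelianGroup.lift fun x =>
      ∑ i : Fin (d + 2),
        (-1 : ℤ) ^ (i : ℕ) •
          (FreeAbelianGroup.of (fun j => x (i.succ.succAbove j)) -
            FreeAbelianGroup.of (fun j : Fin (d + 2) =>
              if (j : ℕ) < (i : ℕ) + 1 then under φ (x j.castSucc) (x i.succ)
              else overOp φ (x j.succ) (x i.succ)))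


/-- The subgroup of `G`-coinvariants relations in `C^{gp}_n(M;ℤ)`:
generated by all `(m₁g,…,m_ng) − (m₁,…,m_n)`. -/
def coinvSub (n : ℕ) : AddSubgroup (FreeAbelianGroup (Fin n → M)) :=
  AddSubgroup.closure
    {z | ∃ (m : Fin n → M) (g : G),
        z = FreeAbelianGroup.of (fun i => ract (m i) g) - FreeAbelianGroup.of m}

/-- The coinvariant group chain group `C^{gp}_n(M;ℤ)_G`. -/
abbrev CgpG (n : ℕ) : Type _ :=
  FreeAbelianGroup (Fin n → M) ⧸ coinvSub (G := G) (M := M) n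

/-- The group-homology boundary map `∂^{gp}_{n+1} : C^{gp}_{n+1}(M;ℤ) → C^{gp}_n(M;ℤ)`
(it is `0` in degrees `≤ 1`, which agrees with this formula at `n = 0`). -/
def dgp (n : ℕ) :
    FreeAbelianGroup (Fin (n + 1) → M) →+ FreeAbelianGroup (Fin n → M) :=
  FreeAbelianGroup.lift fun m =>
    (∑ p : Fin (n + 1), (-1 : ℤ) ^ (p : ℕ) • FreeAbelianGroup.of (dMmer n p m)) +
      (-1 : ℤ) ^ (n + 1) • FreeAbelianGroup.of fun j : Fin n => m j.castSucc

/-- `|k| = k₁ + ⋯ + k_n`. -/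
def wt {n : ℕ} (k : Fin n → Bool) : ℕ := ∑ i, if k i then 1 else 0

/-- `g_{k,i} = φ(g₀^{k₀} ⋯ g_i^{k_i}) · g_{i+1}^{k_{i+1}} ⋯ g_{n-1}^{k_{n-1}}`
(indices written `0`-based; the products are ordered). -/
def gki {n : ℕ} (g : Fin n → G) (k : Fin n → Bool) (i : Fin n) : G :=
  φ ((((List.finRange n).filter fun j => decide (j ≤ i)).map
        fun j => if k j then g j else 1).prod) *
    (((List.finRange n).filter fun j => decide (i < j)).map
        fun j => if k j then g j else 1).prod

/-- The value of `ψ` on a generator: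
`Σ_{k, k₀ = 0} (−1)^{|k|} (m₀ g_{k,0}, …, m_n g_{k,n})`, as an element of the free
abelian group (before passing to coinvariants). -/
def psiVal (n : ℕ) (x : (Fin (n + 1) → G) × (Fin (n + 1) → M)) :
    FreeAbelianGroup (Fin (n + 1) → M) :=
  ∑ k ∈ Finset.univ.filter fun k : Fin (n + 1) → Bool => k 0 = false,
    (-1 : ℤ) ^ wt k • FreeAbelianGroup.of fun i => ract (x.2 i) (gki φ x.1 k i)

/-- `ψ` as a homomorphism into the free abelian group (before coinvariants). -/
def psiFree (n : ℕ) :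
    FreeAbelianGroup ((Fin (n + 1) → G) × (Fin (n + 1) → M)) →+
      FreeAbelianGroup (Fin (n + 1) → M) :=
  FreeAbelianGroup.lift (psiVal φ n)

/-- The homomorphism `ψ : C^{BR_U} → C^{gp}(M;ℤ)_G`. -/
def psiG (n : ℕ) :
    FreeAbelianGroup ((Fin (n + 1) → G) × (Fin (n + 1) → M)) →+
      CgpG (G := G) (M := M) (n + 1) :=
  (QuotientAddGroup.mk' (coinvSub (G := G) (M := M) (n + 1))).comp (psiFree φ n)

/-- The homomorphism `ψ_{•,λ}`, sending a generator `x` to `ψ(x) ⊗ λ(x₁)` where `x₁` is the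
first `G`-entry of `x`. -/
noncomputable def psiLam (lam : G → A) (n : ℕ) :
    FreeAbelianGroup ((Fin (n + 1) → G) × (Fin (n + 1) → M)) →+
      TensorProduct ℤ (CgpG (G := G) (M := M) (n + 1)) A :=
  FreeAbelianGroup.lift fun x =>
    (QuotientAddGroup.mk' (coinvSub (G := G) (M := M) (n + 1)) (psiVal φ n x)) ⊗ₜ[ℤ]
      lam (x.1 0)

/-- `D^{gp}_n(M;ℤ)_G`: the image in the coinvariants of the subgroup generated by tuples
with a vanishing entry in a position `1 ≤ i ≤ n−1`. -/
def DgpGsub (n : ℕ) : AddSubgroup (CgpG (G := G) (M := M) n) :=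
  (AddSubgroup.closure
      {z : FreeAbelianGroup (Fin n → M) |
        ∃ (m : Fin n → M) (i : Fin n),
          (i : ℕ) + 1 < n ∧ m i = 0 ∧ z = FreeAbelianGroup.of m}).map
    (QuotientAddGroup.mk' (coinvSub (G := G) (M := M) n))

/-!
Writing `P_i` for the product of the first `i` letters of the word `g₀^{k₀}, …, g_n^{k_n}`, one has
`g_{k,i} = φ(P_{i+1}) P_{i+1}⁻¹ P_{n+1}`. Moving the letter at position `p` to the front of the word
conjugates the letters before it, so the `p`-th face of the summand of `ψ` at `k` is again a summand
of `ψ`: at the deleting face of the tuple when `k_p = 0`, and at the conjugating face when `k_p = 1`.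
Summing over `k` with signs, the faces of `∂^{gp}` at `p ≥ 1` reproduce the terms of `∂^{BR_U}` with
the opposite sign. The two remaining faces of `∂^{gp}` drop the first or the last entry; there the
letter `g₁^{k₁}`, respectively the last letter, only enters through a common right factor, which is
invisible in the coinvariants, so their contributions cancel in pairs. Hence `ψ` anticommutes with
the boundaries, and precomposing with the chain map `γ` turns group cocycles into birack cocycles.
-/

section RightAction

@[simp]
theorem ract_zero (g : G) : ract (0 : M) g = 0 := smul_zero _

@[simp]
theorem ract_one (m : M) : ract m (1 : G) = m := one_smul _ m

theorem ract_add (m m' : M) (g : G) : ract (m + m') g = ract m g + ract m' g := smul_add _ m m'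

theorem ract_sub (m m' : M) (g : G) : ract (m - m') g = ract m g - ract m' g := smul_sub _ m m'

theorem ract_ract (m : M) (g h : G) : ract (ract m g) h = ract m (g * h) := by
  simp [ract, smul_smul]

end RightAction

section GammaIsChainMap

variable {n : ℕ}

/-- The extension of a finite tuple by zero to all of `ℕ`. It gives the consecutive differences
taken by `γ` the same formula in the last position as in the others. -/
def extendZero (u : Fin n → M) (a : ℕ) : M :=
  if h : a < n then u ⟨a, h⟩ else 0

/-- The `M`-part `(m₁ − m₂, …, m_{n−1} − m_n, m_n)` of `γ`. -/
def diffTuple (u : Fin n → M) : Fin n → M :=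
  fun j => extendZero u j - extendZero u (j + 1)

omit [Group G] [DistribMulAction Gᵐᵒᵖ M] in
theorem gammaMap_of (x : Fin n → M × G) :
    gammaMap n (of x) = of (fun j => (x j).2, diffTuple fun j => (x j).1) := by
  rw [gammaMap, lift_apply_of]
  congr
  funext j
  simp [diffTuple, extendZero]

theorem extendZero_succAbove (p : Fin (n + 1)) (u : Fin (n + 1) → M) (a : ℕ) :
    extendZero (fun j => u (p.succAbove j)) a = extendZero u (if a < p then a else a + 1) := by
  have hp := p.is_lt
  unfold extendZero
  split_ifs <;> first | omega | rfl | skip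
  all_goals
    refine congrArg u (Fin.ext ?_)
    simp [Fin.succAbove, Fin.lt_def, *]

theorem diffTuple_succAbove (p : Fin (n + 1)) (u : Fin (n + 1) → M) :
    diffTuple (fun j => u (p.succAbove j)) = dMmer n p (diffTuple u) := by
  funext j
  simp only [diffTuple, dMmer, extendZero_succAbove, Fin.val_castSucc, Fin.val_succ]
  split_ifs <;> first | omega | abel

/-- The `M`-part of the face of a tuple of `X` that acts on the entries by the `p`-th one. -/
def actFace (p : Fin (n + 1)) (g : G) (u : Fin (n + 1) → M) : Fin n → M :=
  fun j =>
    if (j : ℕ) < p then ract (u j.castSucc) g + ract (u p) (φ g) - ract (u p) g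
    else ract (u j.succ) (φ g)

theorem extendZero_actFace (p : Fin (n + 1)) (g : G) (u : Fin (n + 1) → M) (a : ℕ) :
    extendZero (actFace φ p g u) a =
      if a < p then ract (extendZero u a) g + ract (extendZero u p) (φ g) -
        ract (extendZero u p) g
      else ract (extendZero u (a + 1)) (φ g) := by
  have hp := p.is_lt
  unfold extendZero actFace
  split_ifs <;> first | omega | simp

theorem diffTuple_actFace (p : Fin (n + 1)) (g : Fin (n + 1) → G) (u : Fin (n + 1) → M) :
    diffTuple (actFace φ p (g p) u) = dMconj φ n p g (diffTuple u) := by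
  funext j
  simp only [diffTuple, dMconj, extendZero_actFace, Fin.val_castSucc, Fin.val_succ]
  split_ifs with hlt hlt' heq <;> first | omega | skip
  · rw [ract_sub]; abel
  · rw [ract_sub, ract_sub, heq]; abel
  · rw [ract_sub]

theorem gammaMap_comp_dBRX (d : ℕ) :
    (gammaMap (d + 1)).comp (dBRX (M := M) φ d) = (dBRUX φ d).comp (gammaMap (d + 2)) := by
  cases d with
  | zero => simp [dBRX, dBRUX]
  | succ d =>
    ext x
    simp only [AddMonoidHom.comp_apply, dBRX, dBRUX, gammaMap_of, lift_apply_of, map_sum,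
      map_zsmul, map_sub]
    refine Finset.sum_congr rfl fun i _ => ?_
    have hunder : diffTuple (fun j : Fin (d + 2) => (if (j : ℕ) < i + 1
        then under φ (x j.castSucc) (x i.succ) else overOp φ (x j.succ) (x i.succ)).1) =
        dMconj φ (d + 2) i.succ (fun j => (x j).2) (diffTuple fun j => (x j).1) := by
      rw [← diffTuple_actFace]
      congr with j
      simp only [actFace, Fin.val_succ]
      split_ifs <;> rfl
    rw [hunder, diffTuple_succAbove i.succ fun j => (x j).1]
    congr 4
    funext j
    simp only [dGconj, Fin.val_succ]
    split_ifs <;> rfl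

end GammaIsChainMap

section PrefixTwist

variable {n : ℕ}

/-- The group element `φ(w₀ ⋯ w_i) · w_{i+1} ⋯ w_{n−1}` attached to a word `w`, so that
`g_{k,i}` is the prefix twist of the word with letters `g_j^{k_j}`. The suffix product is encoded
as `(w₀ ⋯ w_i)⁻¹ · w₀ ⋯ w_{n−1}`. -/
def prefixTwist (w : Fin n → G) (i : Fin n) : G :=
  φ (Fin.partialProd w i.succ) * ((Fin.partialProd w i.succ)⁻¹ * Fin.partialProd w (Fin.last n))

/-- The word with letters `g_j^{k_j}` for `k_j ∈ {0, 1}`. -/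
def subword (g : Fin n → G) (k : Fin n → Bool) : Fin n → G :=
  fun j => if k j then g j else 1

theorem filter_le_finRange (i : Fin n) :
    (List.finRange n).filter (fun j => decide (j ≤ i)) = (List.finRange n).take (i + 1) := by
  conv_lhs => rw [← List.take_append_drop (i + 1) (List.finRange n), List.filter_append]
  have hdrop : (List.drop (i + 1) (List.finRange n)).filter (fun j => decide (j ≤ i)) = [] := by
    simp only [List.filter_eq_nil_iff, List.mem_drop_iff_getElem]
    rintro _ ⟨a, ha, rfl⟩
    simp only [List.getElem_finRange, Fin.cast_mk, decide_eq_true_eq, not_le, Fin.lt_def]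
    omega
  rw [hdrop, List.append_nil, List.filter_eq_self]
  simp only [List.mem_take_iff_getElem]
  rintro _ ⟨a, ha, rfl⟩
  simp only [List.getElem_finRange, Fin.cast_mk, Fin.le_def, decide_eq_true_eq]
  omega

theorem filter_lt_finRange (i : Fin n) :
    (List.finRange n).filter (fun j => decide (i < j)) = (List.finRange n).drop (i + 1) := by
  conv_lhs => rw [← List.take_append_drop (i + 1) (List.finRange n), List.filter_append]
  have htake : (List.take (i + 1) (List.finRange n)).filter (fun j => decide (i < j)) = [] := by
    simp only [List.filter_eq_nil_iff, List.mem_take_iff_getElem]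
    rintro _ ⟨a, ha, rfl⟩
    simp only [List.getElem_finRange, Fin.cast_mk, decide_eq_true_eq, not_lt, Fin.le_def]
    omega
  rw [htake, List.nil_append, List.filter_eq_self]
  simp only [List.mem_drop_iff_getElem]
  rintro _ ⟨a, ha, rfl⟩
  simp only [List.getElem_finRange, Fin.cast_mk, Fin.lt_def, decide_eq_true_eq]
  omega

theorem gki_eq_prefixTwist (g : Fin n → G) (k : Fin n → Bool) (i : Fin n) :
    gki φ g k i = prefixTwist φ (subword g k) i := by
  have hsplit := List.prod_take_mul_prod_drop (List.ofFn (subword g k)) (i + 1)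
  have htotal : Fin.partialProd (subword g k) (Fin.last n) = (List.ofFn (subword g k)).prod := by
    rw [Fin.partialProd, Fin.val_last, List.take_of_length_le (by simp)]
  rw [gki, prefixTwist, htotal, ← hsplit, filter_le_finRange, filter_lt_finRange, Fin.partialProd,
    Fin.val_succ, inv_mul_cancel_left, List.ofFn_eq_map, List.map_take, List.map_drop]
  rfl

theorem dGconj_apply (p : Fin (n + 1)) (w : Fin (n + 1) → G) (j : Fin n) :
    dGconj n p w j =
      if (j : ℕ) < p then (w p)⁻¹ * w (p.succAbove j) * w p else w (p.succAbove j) := by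
  unfold dGconj
  split_ifs with h
  · rw [Fin.succAbove_of_castSucc_lt _ _ h]
  · rw [Fin.succAbove_of_le_castSucc _ _ (not_lt.1 h)]

-- Pulling the letter `w p` to the front of a product conjugates the letters it passes.
theorem partialProd_castSucc_eq_conj (w : Fin (n + 1) → G) (p j : Fin (n + 1))
    (h : j ≤ p) :
    Fin.partialProd w j.castSucc = w p * Fin.partialProd (dGconj n p w) j * (w p)⁻¹ := by
  induction j using Fin.induction with
  | zero => simp
  | succ j ih =>
    have hj : (j : ℕ) < p := h
    rw [← Fin.succ_castSucc, Fin.partialProd_succ, Fin.partialProd_succ, ih (le_of_lt hj)]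
    simp [dGconj, hj, mul_assoc]

theorem partialProd_succ_eq_mul (w : Fin (n + 1) → G) (p j : Fin (n + 1)) (h : p ≤ j) :
    Fin.partialProd w j.succ = w p * Fin.partialProd (dGconj n p w) j := by
  induction j using Fin.induction with
  | zero =>
    obtain rfl : p = 0 := Fin.le_zero_iff.1 h
    simpa using Fin.partialProd_succ w 0
  | succ j ih =>
    rcases h.eq_or_lt with rfl | hlt
    · rw [Fin.partialProd_succ, partialProd_castSucc_eq_conj w _ _ le_rfl, inv_mul_cancel_right]
    · have hj : ¬ (j : ℕ) < p := not_lt.2 (Fin.le_castSucc_iff.2 hlt)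
      rw [Fin.partialProd_succ, ← Fin.succ_castSucc, ih (Fin.le_castSucc_iff.2 hlt),
        Fin.partialProd_succ, mul_assoc]
      simp [dGconj, hj]

theorem prefixTwist_castSucc (hφ : ∀ g : G, φ g ∈ Subgroup.center G)
    (w : Fin (n + 1) → G) (p : Fin (n + 1)) (j : Fin n) (h : j.succ ≤ p) :
    prefixTwist φ w j.castSucc = w p * prefixTwist φ (dGconj n p w) j := by
  have hconj (a : G) : φ (w p * a * (w p)⁻¹) * w p = w p * φ a := by
    rw [Subgroup.mem_center_iff.1 (hφ a), map_mul, map_mul, map_inv,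
      ← Subgroup.mem_center_iff.1 (hφ (w p)) (φ a), mul_inv_cancel_right]
  rw [prefixTwist, prefixTwist, ← mul_assoc (w p), ← hconj, Fin.succ_castSucc,
    partialProd_castSucc_eq_conj w p _ h, ← Fin.succ_last,
    partialProd_succ_eq_mul w p _ (Fin.le_last p)]
  group

theorem prefixTwist_succ (w : Fin (n + 1) → G) (p : Fin (n + 1)) (j : Fin n)
    (h : p ≤ j.succ) :
    prefixTwist φ w j.succ = φ (w p) * prefixTwist φ (dGconj n p w) j := by
  simp only [prefixTwist, ← Fin.succ_last, partialProd_succ_eq_mul w p _ h,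
    partialProd_succ_eq_mul w p _ (Fin.le_last p), map_mul]
  group

theorem prefixTwist_succ_eq_head_mul (w : Fin (n + 2) → G) (j : Fin (n + 1)) :
    prefixTwist φ w j.succ =
      φ (w 0 * w 1) * prefixTwist φ (Fin.cons 1 (Fin.tail (Fin.tail w))) j := by
  simp [prefixTwist, ← Fin.succ_last, Fin.partialProd_succ', Fin.tail_def, mul_assoc]

theorem prefixTwist_castSucc_eq_mul_last (w : Fin (n + 1) → G) (j : Fin n) :
    prefixTwist φ w j.castSucc = prefixTwist φ (Fin.init w) j * w (Fin.last n) := by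
  have hinit (i : Fin (n + 1)) : Fin.partialProd w i.castSucc = Fin.partialProd (Fin.init w) i :=
    (Fin.partialProd_init i).symm
  simp only [prefixTwist, ← Fin.succ_last, Fin.partialProd_succ w (Fin.last n), Fin.succ_castSucc,
    hinit, mul_assoc]

end PrefixTwist

section AlternatingSum

variable {n : ℕ}

/-- The signed sum `Σ_{k, k₀ = 0} (−1)^{|k|} H(k)` over the cube in the definition of `ψ`, additive
in the summand `H`. -/
def altSum (n : ℕ) : ((Fin (n + 1) → Bool) → A) →+ A :=
  ∑ k ∈ Finset.univ.filter fun k : Fin (n + 1) → Bool => k 0 = false,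
    (-1 : ℤ) ^ wt k • Pi.evalAddMonoidHom (fun _ => A) k

theorem altSum_apply (H : (Fin (n + 1) → Bool) → A) :
    altSum n H = ∑ k ∈ Finset.univ.filter fun k : Fin (n + 1) → Bool => k 0 = false,
      (-1 : ℤ) ^ wt k • H k := by
  simp [altSum]

theorem map_altSum {B : Type*} [AddCommGroup B] (f : A →+ B)
    (H : (Fin (n + 1) → Bool) → A) : f (altSum n H) = altSum n fun k => f (H k) := by
  simp only [altSum_apply, map_sum, map_zsmul]

theorem wt_insertNth (p : Fin (n + 1)) (b : Bool) (k : Fin n → Bool) :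
    wt (p.insertNth b k : Fin (n + 1) → Bool) = (if b then 1 else 0) + wt k := by
  simp [wt, Fin.sum_univ_succAbove _ p]

theorem altSum_eq_altSum_insertNth (i : Fin (n + 1)) (H : (Fin (n + 2) → Bool) → A) :
    altSum (n + 1) H =
      altSum n fun k => H (i.succ.insertNth false k) - H (i.succ.insertNth true k) := by
  have hzero (b : Bool) (k : Fin (n + 1) → Bool) :
      (i.succ.insertNth b k : Fin (n + 2) → Bool) 0 = k 0 := by
    simpa using Fin.insertNth_apply_succAbove (α := fun _ => Bool) i.succ b k 0
  have hequiv (b : Bool) (k : Fin (n + 1) → Bool) :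
      Fin.insertNthEquiv (fun _ => Bool) i.succ (b, k) = i.succ.insertNth b k := rfl
  simp only [altSum_apply, Finset.sum_filter]
  rw [← (Fin.insertNthEquiv (fun _ => Bool) i.succ).sum_comp, Fintype.sum_prod_type_right]
  refine Finset.sum_congr rfl fun k _ => ?_
  simp only [hequiv, Fintype.sum_bool, hzero, wt_insertNth]
  by_cases hk : k 0 = false
  · simp [hk, pow_add, sub_eq_neg_add]
  · simp [hk]

theorem altSum_eq_zero (i : Fin (n + 1)) (H : (Fin (n + 2) → Bool) → A)
    (h : ∀ k, H (i.succ.insertNth false k) = H (i.succ.insertNth true k)) :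
    altSum (n + 1) H = 0 := by
  simp only [altSum_eq_altSum_insertNth i H, h, sub_self, ← Pi.zero_def, map_zero]

end AlternatingSum

section PsiIsChainMap

variable {n : ℕ}

/-- The summand `(m₀ g_{k,0}, …, m_n g_{k,n})` of `ψ`, as a function of the word with letters
`g_j^{k_j}`. -/
def twistTuple (m : Fin n → M) (w : Fin n → G) : Fin n → M :=
  fun j => ract (m j) (prefixTwist φ w j)

theorem psiFree_of (x : (Fin (n + 1) → G) × (Fin (n + 1) → M)) :
    psiFree φ n (of x) = altSum n fun k => of (twistTuple φ x.2 (subword x.1 k)) := by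
  simp only [psiFree, lift_apply_of, psiVal, altSum_apply, gki_eq_prefixTwist]
  rfl

theorem psiG_of (x : (Fin (n + 1) → G) × (Fin (n + 1) → M)) :
    psiG φ n (of x) =
      altSum n fun k => QuotientAddGroup.mk' _ (of (twistTuple φ x.2 (subword x.1 k))) := by
  rw [psiG, AddMonoidHom.comp_apply, psiFree_of, map_altSum]

theorem mk_of_ract (m : Fin n → M) (g : G) :
    QuotientAddGroup.mk' (coinvSub (G := G) n) (of fun j => ract (m j) g) =
      QuotientAddGroup.mk' (coinvSub n) (of m) := by
  rw [← sub_eq_zero, ← map_sub, QuotientAddGroup.mk'_apply, QuotientAddGroup.eq_zero_iff]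
  exact AddSubgroup.subset_closure ⟨m, g, rfl⟩

theorem dMmer_twistTuple (hφ : ∀ g : G, φ g ∈ Subgroup.center G) (p : Fin (n + 1))
    (m : Fin (n + 1) → M) (w : Fin (n + 1) → G) :
    dMmer n p (twistTuple φ m w) = twistTuple φ (dMconj φ n p w m) (dGconj n p w) := by
  have hbelow (j : Fin n) (h : (j : ℕ) + 1 ≤ p) :
      twistTuple φ m w j.castSucc =
        ract (ract (m j.castSucc) (w p)) (prefixTwist φ (dGconj n p w) j) := by
    rw [twistTuple, ract_ract, prefixTwist_castSucc φ hφ w p j h]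
  have habove (j : Fin n) (h : (p : ℕ) ≤ j + 1) :
      twistTuple φ m w j.succ =
        ract (ract (m j.succ) (φ (w p))) (prefixTwist φ (dGconj n p w) j) := by
    rw [twistTuple, ract_ract, prefixTwist_succ φ w p j h]
  funext j
  change _ = ract (dMconj φ n p w m j) _
  simp only [dMmer, dMconj]
  split_ifs with hlt heq
  · exact hbelow j hlt.le
  · rw [hbelow j heq.le, habove j heq.ge, ract_add]
  · exact habove j (by omega)

theorem dGconj_subword_insertNth_true (p : Fin (n + 1)) (g : Fin (n + 1) → G)
    (k : Fin n → Bool) :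
    dGconj n p (subword g (p.insertNth true k)) = subword (dGconj n p g) k := by
  funext j
  simp only [dGconj_apply, subword, Fin.insertNth_apply_same, Fin.insertNth_apply_succAbove]
  split_ifs <;> simp

theorem dGconj_subword_insertNth_false (p : Fin (n + 1)) (g : Fin (n + 1) → G)
    (k : Fin n → Bool) :
    dGconj n p (subword g (p.insertNth false k)) = subword (dGdel n p g) k := by
  funext j
  simp [dGconj_apply, dGdel, subword]

theorem dMconj_subword_insertNth_true (p : Fin (n + 1)) (g : Fin (n + 1) → G)
    (k : Fin n → Bool) (m : Fin (n + 1) → M) :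
    dMconj φ n p (subword g (p.insertNth true k)) m = dMconj φ n p g m := by
  funext j
  simp [dMconj, subword]

theorem dMconj_subword_insertNth_false (p : Fin (n + 1)) (g : Fin (n + 1) → G)
    (k : Fin n → Bool) (m : Fin (n + 1) → M) :
    dMconj φ n p (subword g (p.insertNth false k)) m = dMmer n p m := by
  funext j
  simp [dMconj, dMmer, subword]

theorem altSum_face_succ (hφ : ∀ g : G, φ g ∈ Subgroup.center G) (i : Fin (n + 1))
    (g : Fin (n + 2) → G) (m : Fin (n + 2) → M) :
    altSum (n + 1) (fun k => QuotientAddGroup.mk' (coinvSub (G := G) (n + 1))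
        (of (dMmer (n + 1) i.succ (twistTuple φ m (subword g k))))) =
      psiG φ n (of (dGdel (n + 1) i.succ g, dMmer (n + 1) i.succ m)) -
        psiG φ n (of (dGconj (n + 1) i.succ g, dMconj φ (n + 1) i.succ g m)) := by
  rw [altSum_eq_altSum_insertNth i, psiG_of, psiG_of, ← map_sub]
  simp only [dMmer_twistTuple φ hφ, dGconj_subword_insertNth_true, dGconj_subword_insertNth_false,
    dMconj_subword_insertNth_true, dMconj_subword_insertNth_false]
  rfl

theorem dMmer_zero_twistTuple (hφ : ∀ g : G, φ g ∈ Subgroup.center G)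
    (m : Fin (n + 2) → M) (w : Fin (n + 2) → G) :
    dMmer (n + 1) 0 (twistTuple φ m w) = fun j =>
      ract (twistTuple φ (Fin.tail m) (Fin.cons 1 (Fin.tail (Fin.tail w))) j) (φ (w 0 * w 1)) := by
  funext j
  rw [twistTuple, ract_ract, Subgroup.mem_center_iff.1 (hφ _), ← prefixTwist_succ_eq_head_mul]
  simp [dMmer, twistTuple, Fin.tail]

theorem altSum_face_zero (hφ : ∀ g : G, φ g ∈ Subgroup.center G)
    (g : Fin (n + 2) → G) (m : Fin (n + 2) → M) :
    altSum (n + 1) (fun k => QuotientAddGroup.mk' (coinvSub (G := G) (n + 1))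
      (of (dMmer (n + 1) 0 (twistTuple φ m (subword g k))))) = 0 := by
  have htail (b : Bool) (k : Fin (n + 1) → Bool) :
      Fin.tail (Fin.tail (subword g ((Fin.succ 0).insertNth b k))) =
        subword (Fin.tail (Fin.tail g)) (Fin.tail k) := by
    rw [← Fin.cons_self_tail k, Fin.insertNth_succ_cons, Fin.insertNth_zero']
    rfl
  refine altSum_eq_zero 0 _ fun k => ?_
  simp only [dMmer_zero_twistTuple φ hφ, mk_of_ract, htail]

theorem init_twistTuple (m : Fin (n + 1) → M) (w : Fin (n + 1) → G) :
    Fin.init (twistTuple φ m w) = fun j =>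
      ract (twistTuple φ (Fin.init m) (Fin.init w) j) (w (Fin.last n)) := by
  funext j
  simp only [Fin.init, twistTuple, ract_ract, prefixTwist_castSucc_eq_mul_last]

theorem altSum_face_last (g : Fin (n + 2) → G) (m : Fin (n + 2) → M) :
    altSum (n + 1) (fun k => QuotientAddGroup.mk' (coinvSub (G := G) (n + 1))
      (of (Fin.init (twistTuple φ m (subword g k))))) = 0 := by
  have hinit (b : Bool) (k : Fin (n + 1) → Bool) :
      Fin.init (subword g ((Fin.last (n + 1)).insertNth b k)) = subword (Fin.init g) k := by
    funext j
    simp [Fin.init, subword]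
  refine altSum_eq_zero (Fin.last n) _ fun k => ?_
  simp only [Fin.succ_last, init_twistTuple, mk_of_ract, hinit]

theorem dgp_of (m : Fin (n + 1) → M) :
    dgp n (of m) = of (dMmer n 0 m) -
      ∑ i : Fin n, (-1 : ℤ) ^ (i : ℕ) • of (dMmer n i.succ m) +
      (-1 : ℤ) ^ (n + 1) • of (Fin.init m) := by
  rw [dgp, lift_apply_of, Fin.sum_univ_succ]
  simp only [Fin.val_zero, pow_zero, one_smul, Fin.val_succ, pow_succ, mul_neg, mul_one, neg_smul,
    Finset.sum_neg_distrib, sub_eq_add_neg]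
  rfl

theorem altSum_dgp {N : ℕ} (f : FreeAbelianGroup (Fin n → M) →+ A)
    (T : (Fin (N + 1) → Bool) → Fin (n + 1) → M) :
    altSum N (fun k => f (dgp n (of (T k)))) =
      altSum N (fun k => f (of (dMmer n 0 (T k)))) -
        ∑ i : Fin n, (-1 : ℤ) ^ (i : ℕ) • altSum N (fun k => f (of (dMmer n i.succ (T k)))) +
        (-1 : ℤ) ^ (n + 1) • altSum N (fun k => f (of (Fin.init (T k)))) := by
  simp only [← map_zsmul, ← map_sum, ← map_sub, ← map_add]
  congr
  funext k
  simp [dgp_of]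

theorem psiG_comp_dBRUX (hφ : ∀ g : G, φ g ∈ Subgroup.center G) (n : ℕ) :
    (psiG φ (n + 1)).comp (dBRUX (M := M) φ (n + 1)) =
      -(((QuotientAddGroup.mk' (coinvSub (n + 2))).comp (dgp (n + 2))).comp
        (psiFree φ (n + 2))) := by
  ext ⟨g, m⟩
  simp only [AddMonoidHom.comp_apply, AddMonoidHom.neg_apply, psiFree_of, map_altSum]
  rw [altSum_dgp, altSum_face_zero φ hφ, altSum_face_last]
  simp only [dBRUX, lift_apply_of, map_sum, map_zsmul, map_sub, ← altSum_face_succ φ hφ, zero_sub,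
    smul_zero, add_zero, neg_neg]

end PsiIsChainMap

/-- Let `n ≥ 1` (encoded as `n+1` below) and let
`f : C^{gp}_{n+1}(M;ℤ)_G → A` be a group `(n+1)`-cocycle (`f ∘ ∂^{gp}_{n+2} = 0`).
Then `Φ_f = f ∘ ψ_n ∘ γ_n : C^{BR}_n(X;ℤ)_X → A` is a birack `n`-cocycle of the
`G`-Alexander biquandle with `X`-set `X`: `Φ_f ∘ ∂^{BR}_{n+1} = 0`. -/
theorem birackX_cocycle_of_group_cocycle (hφ : ∀ g : G, φ g ∈ Subgroup.center G) :
    ∀ (n : ℕ) (f : CgpG (G := G) (M := M) (n + 2) →+ A),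
      f.comp ((QuotientAddGroup.mk' (coinvSub (G := G) (M := M) (n + 2))).comp
          (dgp (M := M) (n + 2))) = 0 →
      ((f.comp (psiG φ (n + 1))).comp (gammaMap (n + 2))).comp (dBRX φ (n + 1)) = 0 := by
  intro n f hf
  have hcocycle : f.comp ((psiG φ (n + 1)).comp (dBRUX φ (n + 1))) = 0 := by
    rw [psiG_comp_dBRUX φ hφ, AddMonoidHom.comp_neg, ← AddMonoidHom.comp_assoc, hf,
      AddMonoidHom.zero_comp, neg_zero]
  rw [AddMonoidHom.comp_assoc, gammaMap_comp_dBRX, ← AddMonoidHom.comp_assoc,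
    AddMonoidHom.comp_assoc _ _ f, hcocycle, AddMonoidHom.zero_comp]

end GAlex
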